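/- arXiv:1312.7375 — 12 statements merged into one kernel-verified Lean document; each statement's English description precedes it below -/
import Mathlib

section
/- Let k ≥ 1 and let (γ_1,c_1),…,(γ_k,c_k) be pairwise distinct pairs of real numbers with γ_i > 0 for every i. Suppose real numbers d_{00}, d_{01}, d_{10}, d_{11}, …, d_{k0}, d_{k1} satisfy d_{00} + d_{01}·y + Σ_{i=1}^k (d_{i0} + d_{i1}·y)·(1/(1+e^{−γ_i(y−c_i)})) = 0 for all y ∈ ℝ. Then d_{i0} = d_{i1} = 0 for every i = 0, 1, …, k. -/
/-- The logistic transition function `G(y; γ, c) = 1/(1+e^{-γ(y-c)})`. -/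
noncomputable def logisticG (γ c y : ℝ) : ℝ := 1 / (1 + Real.exp (-γ * (y - c)))

lemma entire_zero_of_real (F : ℂ → ℂ) (hF : Differentiable ℂ F)
    (h : ∀ y : ℝ, F (y : ℂ) = 0) : ∀ z, F z = 0 := by
  have hA : AnalyticOnNhd ℂ F Set.univ := fun z _ => hF.analyticAt z
  have hfr : ∃ᶠ z in nhdsWithin (0 : ℂ) {0}ᶜ, F z = 0 := by
    have ht : Filter.Tendsto (fun y : ℝ => (y : ℂ)) (nhdsWithin 0 {0}ᶜ)
        (nhdsWithin (0 : ℂ) {0}ᶜ) := by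
      apply tendsto_nhdsWithin_of_tendsto_nhds_of_eventually_within
      · have := (Complex.continuous_ofReal.tendsto 0)
        simp only [Complex.ofReal_zero] at this
        exact this.mono_left nhdsWithin_le_nhds
      · filter_upwards [self_mem_nhdsWithin] with y hy
        simpa using hy
    exact ht.frequently (Filter.Eventually.frequently (Filter.Eventually.of_forall h))
  have := hA.eqOn_zero_of_preconnected_of_frequently_eq_zero isPreconnected_univ
    (Set.mem_univ 0) hfr
  exact fun z => this (Set.mem_univ z)

/-- The complexified denominator. -/
noncomputable def denE (γ c : ℝ) (z : ℂ) : ℂ := 1 + Complex.exp (-γ * (z - c))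

lemma denE_ne (γ c γ' c' : ℝ) (hγ : 0 < γ) (hγ' : 0 < γ') (hle : γ' ≤ γ)
    (hz : denE γ' c' (c + (Real.pi / γ : ℝ) * Complex.I) = 0) : γ' = γ ∧ c' = c := by
  have he : Complex.exp (-γ' * ((c + (Real.pi / γ : ℝ) * Complex.I) - c')) = -1 := by
    unfold denE at hz
    linear_combination hz
  have hw : (-γ' * ((c + (Real.pi / γ : ℝ) * Complex.I) - c') : ℂ)
      = ((-γ' * (c - c') : ℝ) : ℂ) + ((-(γ' * (Real.pi / γ)) : ℝ) : ℂ) * Complex.I := by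
    push_cast; ring
  rw [hw] at he
  have hn := congrArg norm he
  rw [Complex.norm_exp] at hn
  simp only [Complex.add_re, Complex.ofReal_re, Complex.re_ofReal_mul, Complex.I_re, mul_zero,
    add_zero, norm_neg, norm_one, Real.exp_eq_one_iff] at hn
  have hc : c' = c := by
    rcases mul_eq_zero.1 hn with h1 | h1 <;> linarith
  subst hc
  refine ⟨?_, rfl⟩
  have hr := congrArg Complex.re he
  rw [Complex.exp_re] at hr
  simp at hr
  rw [← Real.cos_pi] at hr
  have hpi := Real.pi_pos
  have h2 : γ' * (Real.pi / γ) = Real.pi := by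
    apply Real.injOn_cos _ _ hr
    · refine ⟨by positivity, ?_⟩
      rw [mul_div_assoc', div_le_iff₀ hγ]
      nlinarith
    · exact ⟨hpi.le, le_rfl⟩
  field_simp at h2
  exact h2

/-- If `d₀₀ + d₀₁ y + ∑ i (dᵢ₀ + dᵢ₁ y) G(y; γᵢ, cᵢ) = 0` for all real `y`, where the pairs
`(γᵢ, cᵢ)` are pairwise distinct with `γᵢ > 0`, then all coefficients vanish. -/
theorem logistic_affine_combination_eq_zero
    (k : ℕ) (hk : 1 ≤ k) (γ c : Fin k → ℝ)
    (hγ : ∀ i, 0 < γ i)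
    (hdist : ∀ i j : Fin k, i ≠ j → (γ i, c i) ≠ (γ j, c j))
    (d00 d01 : ℝ) (d0 d1 : Fin k → ℝ)
    (h : ∀ y : ℝ,
      d00 + d01 * y + ∑ i, (d0 i + d1 i * y) * logisticG (γ i) (c i) y = 0) :
    d00 = 0 ∧ d01 = 0 ∧ ∀ i, d0 i = 0 ∧ d1 i = 0 := by
  classical
  have key : ∀ i, d0 i = 0 ∧ d1 i = 0 := by
    by_contra hcon
    let S : Finset (Fin k) := Finset.univ.filter fun i => ¬ (d0 i = 0 ∧ d1 i = 0)
    have hS : S.Nonempty := by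
      push Not at hcon
      obtain ⟨i, hi⟩ := hcon
      exact ⟨i, by simpa [S] using hi⟩
    obtain ⟨i, hiS, hmax⟩ := S.exists_max_image γ hS
    let F : ℂ → ℂ := fun z => (d00 + d01 * z) * ∏ j ∈ S, denE (γ j) (c j) z
      + ∑ i ∈ S, (d0 i + d1 i * z) * ∏ j ∈ S.erase i, denE (γ j) (c j) z
    have hF : Differentiable ℂ F := by
      unfold F denE
      fun_prop
    have hF0 : ∀ y : ℝ, F (y : ℂ) = 0 := by
      intro y
      have hE : ∀ j, denE (γ j) (c j) (y : ℂ) = ((1 + Real.exp (-γ j * (y - c j)) : ℝ) : ℂ) := by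
        intro j; unfold denE; push_cast; rfl
      have hpos : ∀ j, (1 + Real.exp (-γ j * (y - c j))) ≠ 0 := fun j => by positivity
      have hy := h y
      have hsub : ∑ i, (d0 i + d1 i * y) * logisticG (γ i) (c i) y
          = ∑ i ∈ S, (d0 i + d1 i * y) * logisticG (γ i) (c i) y := by
        symm
        apply Finset.sum_subset (Finset.subset_univ _)
        intro j _ hj
        have : d0 j = 0 ∧ d1 j = 0 := by
          by_contra hh
          exact hj (by simpa [S] using hh)
        simp [this.1, this.2]
      rw [hsub] at hy
      have hR : (d00 + d01 * y) * ∏ j ∈ S, (1 + Real.exp (-γ j * (y - c j)))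
          + ∑ i ∈ S, (d0 i + d1 i * y) * ∏ j ∈ S.erase i, (1 + Real.exp (-γ j * (y - c j)))
          = 0 := by
        have h2 := congrArg (· * ∏ j ∈ S, (1 + Real.exp (-γ j * (y - c j)))) hy
        simp only [zero_mul, add_mul _ (∑ i ∈ S, _), Finset.sum_mul] at h2
        rw [← h2]
        congr 1
        apply Finset.sum_congr rfl
        intro j hj
        rw [← Finset.mul_prod_erase S _ hj]
        unfold logisticG
        have := hpos j
        field_simp
      simp only [F, hE]
      exact_mod_cast hR
    have hz := entire_zero_of_real F hF hF0 (c i + (Real.pi / γ i : ℝ) * Complex.I)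
    have hEi : denE (γ i) (c i) (c i + (Real.pi / γ i : ℝ) * Complex.I) = 0 := by
      unfold denE
      have hne : (γ i : ℂ) ≠ 0 := by exact_mod_cast (hγ i).ne'
      have : (-(γ i) * ((c i + (Real.pi / γ i : ℝ) * Complex.I) - c i) : ℂ)
          = -(Real.pi * Complex.I) := by
        push_cast; field_simp; ring
      rw [this, Complex.exp_neg, Complex.exp_pi_mul_I]; norm_num
    simp only [F] at hz
    rw [Finset.prod_eq_zero hiS hEi, mul_zero, zero_add, Finset.sum_eq_single i] at hz
    · rcases mul_eq_zero.1 hz with h1 | h1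
      · have him := congrArg Complex.im h1
        have hre := congrArg Complex.re h1
        simp [-Complex.ofReal_div] at him hre
        have hd1 : d1 i = 0 := by
          rcases him with h3 | h3
          · exact h3
          · exact absurd h3 (by have := hγ i; have := Real.pi_pos; positivity)
        have hd0 : d0 i = 0 := by simpa [hd1] using hre
        have := (Finset.mem_filter.1 hiS).2
        exact this ⟨hd0, hd1⟩
      · obtain ⟨j, hj, hj0⟩ := Finset.prod_eq_zero_iff.1 h1
        have hj' := Finset.mem_erase.1 hj
        obtain ⟨e1, e2⟩ := denE_ne _ _ _ _ (hγ i) (hγ j) (hmax j hj'.2) hj0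
        exact hdist j i hj'.1 (by rw [e1, e2])
    · intro j hj hji
      rw [Finset.prod_eq_zero (Finset.mem_erase.2 ⟨hji.symm, hiS⟩) hEi, mul_zero]
    · intro hh; exact absurd hiS hh
  have h0 := h 0
  have h1 := h 1
  simp [fun i => (key i).1, fun i => (key i).2] at h0 h1
  refine ⟨h0, ?_, key⟩
  linarith
end

section
/- Let γ > 0 and c ∈ ℝ. For every s with 0 < s < γ, the two-sided Laplace transform of the logistic distribution function satisfies ∫_{−∞}^{∞} e^{−s y} · (1/(1+e^{−γ(y−c)})) dy = (π/γ) · e^{−c s} / sin(π s/γ). -/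
open MeasureTheory Real

lemma aux_beta (a : ℝ) (h0 : 0 < a) (h1 : a < 1) :
    ∫ x in Set.Ioo (0 : ℝ) 1, x ^ (-a) * (1 - x) ^ (a - 1) = π / sin (π * a) := by
  have hc : ((∫ x in Set.Ioo (0 : ℝ) 1, x ^ (-a) * (1 - x) ^ (a - 1) : ℝ) : ℂ)
      = Complex.betaIntegral ((1 - a : ℝ) : ℂ) (a : ℂ) := by
    rw [Complex.betaIntegral, intervalIntegral.integral_of_le zero_le_one,
      integral_Ioc_eq_integral_Ioo, ← integral_complex_ofReal]
    refine setIntegral_congr_fun measurableSet_Ioo fun x hx => ?_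
    have h2 : 0 ≤ 1 - x := by linarith [hx.2]
    rw [Complex.ofReal_mul, Complex.ofReal_cpow hx.1.le, Complex.ofReal_cpow h2]
    push_cast
    congr 2
    ring
  have h := ProbabilityTheory.beta_eq_betaIntegralReal (1 - a) a (by linarith) h0
  rw [← hc, Complex.ofReal_re, ProbabilityTheory.beta] at h
  rw [← h, sub_add_cancel, Real.Gamma_one, div_one, mul_comm, Real.Gamma_mul_Gamma_one_sub]

lemma aux_std (a : ℝ) (h0 : 0 < a) (h1 : a < 1) :
    ∫ u : ℝ, exp (-a * u) * (1 / (1 + exp (-u))) = π / sin (π * a) := by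
  have h := integral_image_eq_integral_abs_deriv_smul (s := Set.univ) MeasurableSet.univ
    (fun x _ => (hasDerivAt_sigmoid x).hasDerivWithinAt) sigmoid_injective.injOn
    (fun x => x ^ (-a) * (1 - x) ^ (a - 1))
  rw [Set.image_univ, range_sigmoid, aux_beta a h0 h1, setIntegral_univ] at h
  rw [h]
  refine integral_congr_ae (Filter.Eventually.of_forall fun u => ?_)
  have hp := sigmoid_pos u
  have hq : 0 < 1 - sigmoid u := by linarith [sigmoid_lt_one u]
  have hm := sigmoid_mul_rexp_neg u
  rw [sigmoid_neg] at hm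
  simp only [smul_eq_mul]
  have he : exp (-a * u) = sigmoid u ^ (-a) * (1 - sigmoid u) ^ a := by
    rw [← hm, mul_rpow hp.le (exp_pos _).le, ← mul_assoc, ← rpow_add hp, neg_add_cancel,
      rpow_zero, one_mul, ← exp_mul]
    congr 1
    ring
  rw [abs_of_pos (mul_pos hp hq), he, rpow_sub_one hq.ne', one_div, ← sigmoid_def]
  field_simp

/-- Two-sided Laplace transform of the logistic distribution function: for `0 < s < γ`,
`∫ e^{-sy} / (1 + e^{-γ(y-c)}) dy = (π/γ) e^{-cs} / sin(πs/γ)`. -/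
theorem laplace_transform_logistic_cdf
    (γ c s : ℝ) (hγ : 0 < γ) (hs : 0 < s) (hsγ : s < γ) :
    ∫ y : ℝ, Real.exp (-s * y) * (1 / (1 + Real.exp (-γ * (y - c)))) =
      (Real.pi / γ) * Real.exp (-c * s) / Real.sin (Real.pi * s / γ) := by
  have h := aux_std (s / γ) (by positivity) ((div_lt_one hγ).2 hsγ)
  set F : ℝ → ℝ := fun u => exp (-(s / γ) * u) * (1 / (1 + exp (-u))) with hF
  have h1 : ∀ y : ℝ, Real.exp (-s * y) * (1 / (1 + Real.exp (-γ * (y - c))))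
      = exp (-c * s) * F (γ * (y - c)) := by
    intro y
    simp only [hF]
    rw [← mul_assoc, ← exp_add, neg_mul γ]
    congr 2
    field_simp
    ring
  simp_rw [h1]
  rw [integral_const_mul, integral_sub_right_eq_self (fun y => F (γ * y)) c,
    Measure.integral_comp_mul_left F γ, h, abs_of_pos (inv_pos.2 hγ), smul_eq_mul,
    mul_div_assoc π s γ]
  ring
end

section
/- Let γ > 0 and c ∈ ℝ. For every s with 0 < s < γ, one has ∫_{−∞}^{∞} e^{−s y} · y · (1/(1+e^{−γ(y−c)})) dy = (π c/γ) · e^{−c s} / sin(π s/γ) + (π²/γ²) · e^{−c s} · cos(π s/γ) / sin²(π s/γ). -/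
open MeasureTheory Real

lemma aux_pt (b u : ℝ) :
    |sigmoid u * (1 - sigmoid u)| * ((sigmoid u) ^ ((1 - b) - 1) * (1 - sigmoid u) ^ (b - 1)) =
      sigmoid u * Real.exp (-b * u) := by
  have h0 := sigmoid_pos u
  have h1 : 1 - sigmoid u = sigmoid u * Real.exp (-u) := by
    rw [sigmoid_mul_rexp_neg, sigmoid_neg]
  have h2 : 0 < 1 - sigmoid u := by linarith [sigmoid_lt_one u]
  rw [abs_of_pos (mul_pos h0 h2)]
  rw [h1, Real.mul_rpow h0.le (Real.exp_pos _).le, ← Real.exp_mul]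
  have e1 : sigmoid u ^ (1 - b - 1) * sigmoid u ^ (b - 1) = (sigmoid u)⁻¹ := by
    rw [← Real.rpow_add h0, ← Real.rpow_neg_one]; congr 1; ring
  have e2 : Real.exp (-u) * Real.exp (-u * (b - 1)) = Real.exp (-b * u) := by
    rw [← Real.exp_add]; congr 1; ring
  calc _ = sigmoid u * sigmoid u * (sigmoid u ^ (1 - b - 1) * sigmoid u ^ (b - 1)) *
        (Real.exp (-u) * Real.exp (-u * (b - 1))) := by ring
    _ = _ := by rw [e1, e2]; field_simp

lemma aux_ptC (b u : ℝ) :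
    |sigmoid u * (1 - sigmoid u)| • (((sigmoid u : ℝ) : ℂ) ^ (((1 - b : ℝ) : ℂ) - 1) *
      (1 - ((sigmoid u : ℝ) : ℂ)) ^ ((b : ℂ) - 1)) =
      ((sigmoid u * Real.exp (-b * u) : ℝ) : ℂ) := by
  have h0 := sigmoid_pos u
  have h2 : 0 < 1 - sigmoid u := by linarith [sigmoid_lt_one u]
  rw [← aux_pt, Complex.real_smul, Complex.ofReal_mul, Complex.ofReal_mul,
    Complex.ofReal_cpow h0.le, Complex.ofReal_cpow h2.le]
  push_cast
  rfl

lemma aux_both (b : ℝ) (hb : 0 < b) (hb1 : b < 1) :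
    Integrable (fun u => sigmoid u * Real.exp (-b * u)) ∧
    ∫ u, sigmoid u * Real.exp (-b * u) = π / Real.sin (π * b) := by
  have hd : ∀ x ∈ (Set.univ : Set ℝ),
      HasDerivWithinAt sigmoid (sigmoid x * (1 - sigmoid x)) Set.univ x :=
    fun x _ => (hasDerivAt_sigmoid x).hasDerivWithinAt
  have hu : 0 < (((1 - b : ℝ) : ℂ)).re := by rw [Complex.ofReal_re]; linarith
  have hv : 0 < ((b : ℂ)).re := by rw [Complex.ofReal_re]; exact hb
  have hI := Complex.betaIntegral_convergent hu hv
  have hE := Complex.betaIntegral_eq_Gamma_mul_div _ _ hu hv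
  rw [intervalIntegrable_iff_integrableOn_Ioo_of_le zero_le_one] at hI
  rw [Complex.betaIntegral, intervalIntegral.integral_of_le zero_le_one,
    integral_Ioc_eq_integral_Ioo] at hE
  have hr : Set.Ioo (0 : ℝ) 1 = sigmoid '' Set.univ := by rw [Set.image_univ, range_sigmoid]
  rw [hr] at hI hE
  rw [integrableOn_image_iff_integrableOn_abs_deriv_smul MeasurableSet.univ hd
    sigmoid_injective.injOn] at hI
  rw [integral_image_eq_integral_abs_deriv_smul MeasurableSet.univ hd
    sigmoid_injective.injOn] at hE
  simp only [aux_ptC, integrableOn_univ, Measure.restrict_univ] at hI hE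
  constructor
  · have := hI.re
    simpa only [RCLike.re_to_complex, Complex.ofReal_re] using this
  · rw [integral_complex_ofReal] at hE
    rw [← Complex.ofReal_add, Complex.Gamma_ofReal, Complex.Gamma_ofReal,
      Complex.Gamma_ofReal, sub_add_cancel, Real.Gamma_one] at hE
    rw [← Real.Gamma_mul_Gamma_one_sub]
    have hE2 : ∫ u, sigmoid u * Real.exp (-b * u) = Real.Gamma (1 - b) * Real.Gamma b / 1 := by
      exact_mod_cast hE
    rw [hE2]
    ring

noncomputable def auxMu : Measure ℝ := volume.withDensity (fun u => ENNReal.ofReal (sigmoid u))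

lemma auxMu_int (g : ℝ → ℝ) : ∫ u, g u ∂auxMu = ∫ u, sigmoid u * g u := by
  rw [auxMu, integral_withDensity_eq_integral_toReal_smul
    (by have := continuous_sigmoid.measurable; fun_prop) (by simp)]
  simp [ENNReal.toReal_ofReal (sigmoid_nonneg _)]

lemma auxMu_intble (g : ℝ → ℝ) : Integrable g auxMu ↔ Integrable (fun u => sigmoid u * g u) := by
  rw [auxMu, integrable_withDensity_iff_integrable_smul'
    (by have := continuous_sigmoid.measurable; fun_prop) (by simp)]
  simp [ENNReal.toReal_ofReal (sigmoid_nonneg _)]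

lemma aux_deriv (b : ℝ) (hb : 0 < b) (hb1 : b < 1) :
    Integrable (fun u => sigmoid u * (u * Real.exp (-b * u))) ∧
    ∫ u, sigmoid u * (u * Real.exp (-b * u)) =
      π ^ 2 * Real.cos (π * b) / Real.sin (π * b) ^ 2 := by
  have hsub : Set.Ioo (-1 : ℝ) 0 ⊆ ProbabilityTheory.integrableExpSet id auxMu := by
    intro t ht
    have := (aux_both (-t) (by linarith [ht.2]) (by linarith [ht.1])).1
    rw [ProbabilityTheory.integrableExpSet, Set.mem_ofPred_eq, auxMu_intble]
    simpa using this
  have hmem : -b ∈ Set.Ioo (-1 : ℝ) 0 := ⟨by linarith, by linarith⟩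
  have hint := interior_maximal hsub isOpen_Ioo hmem
  have h1 := ProbabilityTheory.integrable_pow_mul_exp_of_mem_interior_integrableExpSet hint 1
  have h2 := ProbabilityTheory.hasDerivAt_mgf hint
  rw [auxMu_intble] at h1
  rw [auxMu_int] at h2
  refine ⟨by simpa using h1, ?_⟩
  have hs : Real.sin (π * b) ≠ 0 :=
    (Real.sin_pos_of_pos_of_lt_pi (by positivity) (by nlinarith [Real.pi_pos])).ne'
  have h3 : HasDerivAt (fun t : ℝ => π / Real.sin (π * (-t)))
      (π ^ 2 * Real.cos (π * b) / Real.sin (π * b) ^ 2) (-b) := by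
    have hl : HasDerivAt (fun t : ℝ => π * (-t)) (π * (-1)) (-b) :=
      ((hasDerivAt_id (-b)).neg).const_mul π
    have := (hasDerivAt_const (-b) π).div hl.sin (by simpa using hs)
    convert! this using 1
    simp
    ring
  have heq : (ProbabilityTheory.mgf id auxMu) =ᶠ[nhds (-b)] fun t : ℝ => π / Real.sin (π * (-t)) := by
    filter_upwards [isOpen_Ioo.mem_nhds hmem] with t ht
    have := (aux_both (-t) (by linarith [ht.2]) (by linarith [ht.1])).2
    rw [ProbabilityTheory.mgf, auxMu_int]
    simpa using this
  exact h2.unique (h3.congr_of_eventuallyEq heq)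




/-- Two-sided Laplace transform of `y ↦ y · G(y; γ, c)` where `G` is the logistic
distribution function: for `0 < s < γ`,
`∫ e^{-sy} y / (1 + e^{-γ(y-c)}) dy = (πc/γ) e^{-cs}/sin(πs/γ) + (π²/γ²) e^{-cs} cos(πs/γ)/sin²(πs/γ)`. -/
theorem laplace_transform_id_mul_logistic_cdf
    (γ c s : ℝ) (hγ : 0 < γ) (hs : 0 < s) (hsγ : s < γ) :
    ∫ y : ℝ, Real.exp (-s * y) * y * (1 / (1 + Real.exp (-γ * (y - c)))) =
      (Real.pi * c / γ) * Real.exp (-c * s) / Real.sin (Real.pi * s / γ) +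
        (Real.pi ^ 2 / γ ^ 2) * Real.exp (-c * s) * Real.cos (Real.pi * s / γ) /
          Real.sin (Real.pi * s / γ) ^ 2 := by
  set b := s / γ with hbdef
  have hb : 0 < b := div_pos hs hγ
  have hb1 : b < 1 := (div_lt_one hγ).2 hsγ
  have hsb : s = b * γ := by rw [hbdef]; field_simp
  obtain ⟨i1, e1⟩ := aux_both b hb hb1
  obtain ⟨i2, e2⟩ := aux_deriv b hb hb1
  have hpb : Real.pi * s / γ = π * b := by rw [hbdef]; ring
  have hs0 : Real.sin (π * b) ≠ 0 :=
    (Real.sin_pos_of_pos_of_lt_pi (by positivity) (by nlinarith [Real.pi_pos])).ne'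
  rw [hpb]
  let F : ℝ → ℝ := fun u => Real.exp (-c * s) * c * (sigmoid u * Real.exp (-b * u)) +
    Real.exp (-c * s) * γ⁻¹ * (sigmoid u * (u * Real.exp (-b * u)))
  have hF : ∀ y : ℝ, Real.exp (-s * y) * y * (1 / (1 + Real.exp (-γ * (y - c)))) =
      F (γ * (y - c)) := by
    intro y
    have he : Real.exp (-s * y) = Real.exp (-c * s) * Real.exp (-b * (γ * (y - c))) := by
      rw [← Real.exp_add, hsb]; congr 1; ring
    simp only [F, sigmoid_def]
    rw [he, ← neg_mul γ]
    field_simp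
    ring
  have hint : ∫ u, F u = Real.exp (-c * s) * c * (π / Real.sin (π * b)) +
      Real.exp (-c * s) * γ⁻¹ * (π ^ 2 * Real.cos (π * b) / Real.sin (π * b) ^ 2) := by
    simp only [F]
    rw [integral_add (i1.const_mul _) (i2.const_mul _), integral_const_mul, integral_const_mul,
      e1, e2]
  simp_rw [hF]
  rw [integral_sub_right_eq_self (fun y => F (γ * y)) c, Measure.integral_comp_mul_left F γ, hint,
    abs_of_pos (inv_pos.2 hγ), smul_eq_mul]
  field_simp
end

section
/- Let σ > 0 and γ > 0 be real numbers and let a, b, c, d ∈ ℝ. If a·x² + b + (c·x² + d)·F(σx, γ) = 0 for every x ∈ ℝ, then a = b = c = d = 0. -/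
/-- The smooth transition function of the STGARCH model:
`F(x, γ) = 1/(1+e^{γx}) - 1/2`. -/
noncomputable def stgarchF (x γ : ℝ) : ℝ := 1 / (1 + Real.exp (γ * x)) - 1 / 2

theorem stgarchF_neg (x γ : ℝ) : stgarchF (-x) γ = - stgarchF x γ := by
  unfold stgarchF
  rw [mul_neg, Real.exp_neg]
  have := Real.exp_pos (γ * x)
  field_simp
  ring

theorem stgarchF_ne (x γ : ℝ) (hx : 0 < x) (hγ : 0 < γ) : stgarchF x γ ≠ 0 := by
  unfold stgarchF
  have h1 : 1 < Real.exp (γ * x) := Real.one_lt_exp_iff.2 (mul_pos hγ hx)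
  have h2 : 1 / (1 + Real.exp (γ * x)) < 1 / 2 :=
    one_div_lt_one_div_of_lt (by norm_num) (by linarith)
  linarith

/-- If `a x² + b + (c x² + d) F(σx, γ) = 0` for all real `x`, with `σ > 0` and `γ > 0`,
then `a = b = c = d = 0`. -/
theorem stgarch_identity_coeffs_eq_zero
    (σ γ a b c d : ℝ) (hσ : 0 < σ) (hγ : 0 < γ)
    (h : ∀ x : ℝ, a * x ^ 2 + b + (c * x ^ 2 + d) * stgarchF (σ * x) γ = 0) :
    a = 0 ∧ b = 0 ∧ c = 0 ∧ d = 0 := by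
  have key : ∀ x : ℝ, a * x ^ 2 + b = 0 := by
    intro x
    have h1 := h x
    have h2 := h (-x)
    rw [mul_neg, stgarchF_neg, neg_sq] at h2
    linarith
  have k2 : ∀ x : ℝ, 0 < x → c * x ^ 2 + d = 0 := by
    intro x hx
    have h1 := h x
    rw [key x, zero_add] at h1
    exact (mul_eq_zero.1 h1).resolve_right (stgarchF_ne _ _ (mul_pos hσ hx) hγ)
  have e1 := key 0
  have e2 := key 1
  have e3 := k2 1 (by norm_num)
  have e4 := k2 2 (by norm_num)
  norm_num at e1 e2 e3 e4
  refine ⟨?_, ?_, ?_, ?_⟩ <;> linarith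
end

section
/- Let σ > 0, γ ≥ 0 be real numbers and let a, c, d ∈ ℝ. If a·σ²·x² + (c·σ²·x² + d)·F(σx, γ) = 0 for every x ∈ ℝ, then a = 0, and moreover either γ = 0 or both c = 0 and d = 0. -/
/-- If `a σ² x² + (c σ² x² + d) F(σx, γ) = 0` for all real `x`, with `σ > 0` and `γ ≥ 0`,
then `a = 0`, and moreover either `γ = 0` or both `c = 0` and `d = 0`. -/
theorem stgarch_identity_partial
    (σ γ a c d : ℝ) (hσ : 0 < σ) (hγ : 0 ≤ γ)
    (h : ∀ x : ℝ, a * σ ^ 2 * x ^ 2 + (c * σ ^ 2 * x ^ 2 + d) * stgarchF (σ * x) γ = 0) :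
    a = 0 ∧ (γ = 0 ∨ (c = 0 ∧ d = 0)) := by
  have odd : ∀ y : ℝ, stgarchF (-y) γ = - stgarchF y γ := by
    intro y
    have hp := Real.exp_pos (γ * y)
    unfold stgarchF
    rw [mul_neg, Real.exp_neg]
    field_simp
    ring
  have key : ∀ y : ℝ, a * y ^ 2 + (c * y ^ 2 + d) * stgarchF y γ = 0 := by
    intro y
    have h1 := h (y / σ)
    have e : σ * (y / σ) = y := by field_simp
    rw [e] at h1
    have e2 : σ ^ 2 * (y / σ) ^ 2 = y ^ 2 := by rw [← mul_pow, e]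
    rw [mul_assoc, mul_assoc, e2] at h1
    exact h1
  have h1 := key 1
  have h2 := key (-1)
  have h3 := key 2
  rw [odd] at h2
  have ha : a = 0 := by linarith
  refine ⟨ha, ?_⟩
  rcases hγ.eq_or_lt with h0 | hpos
  · exact Or.inl h0.symm
  right
  have ne : ∀ y : ℝ, 0 < y → stgarchF y γ ≠ 0 := by
    intro y hy
    have hp : 1 < Real.exp (γ * y) := Real.one_lt_exp_iff.mpr (mul_pos hpos hy)
    have : 1 / (1 + Real.exp (γ * y)) < 1 / 2 :=
      one_div_lt_one_div_of_lt (by norm_num) (by linarith)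
    unfold stgarchF
    linarith
  subst ha
  rw [zero_mul, zero_add] at h1 h3
  have h4 := (mul_eq_zero.mp h1).resolve_right (ne 1 (by norm_num))
  have h5 := (mul_eq_zero.mp h3).resolve_right (ne 2 (by norm_num))
  constructor <;> linarith
end

section
/- Let σ > 0, γ° > 0, γ ≥ 0 be real numbers, and let a, c, c°, B, B° ∈ ℝ with (c°, B°) ≠ (0, 0). Suppose that for every x ∈ ℝ, a·σ²·x² + (c·σ²·x² + B)·F(σx, γ) − (c°·σ²·x² + B°)·F(σx, γ°) = 0. Then a = 0, c = c°, B = B°, and γ = γ°. -/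
open Filter Topology in
lemma aux_tendsto (g c B : ℝ) (hg : 0 < g) :
    Tendsto (fun y : ℝ => (c * y ^ 2 + B) * (1 / (1 + Real.exp (g * y)))) atTop (𝓝 0) := by
  have key : ∀ k : ℕ, Tendsto (fun y : ℝ => y ^ k * Real.exp (-(g * y))) atTop (𝓝 0) := by
    intro k
    have h1 := (isLittleO_pow_exp_pos_mul_atTop k hg).tendsto_div_nhds_zero
    refine h1.congr fun y => ?_
    rw [Real.exp_neg, div_eq_mul_inv]
  have h0 := key 0
  have h2 := key 2
  simp only [pow_zero, one_mul] at h0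
  have h3 : Tendsto (fun y : ℝ => 1 / (1 + Real.exp (-(g * y)))) atTop (𝓝 (1 / (1 + 0))) :=
    (tendsto_const_nhds).div (tendsto_const_nhds.add h0) (by norm_num)
  have h4 := ((h2.const_mul c).add (h0.const_mul B)).mul h3
  simp only [mul_zero, add_zero, zero_mul] at h4
  refine h4.congr fun y => ?_
  have := Real.exp_pos (g * y)
  rw [Real.exp_neg]
  field_simp
  ring

open Filter Topology in
lemma aux_poly (p q : ℝ) (h : Tendsto (fun y : ℝ => p * y ^ 2 + q) atTop (𝓝 0)) :
    p = 0 ∧ q = 0 := by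
  have hd : Tendsto (fun y : ℝ => 2 * y) atTop atTop :=
    tendsto_id.const_mul_atTop (by norm_num)
  have h2 := h.comp hd
  have h3 := (h.const_mul 4).sub h2
  have h4 : Tendsto (fun _ : ℝ => 3 * q) atTop (𝓝 (4 * 0 - 0)) :=
    h3.congr fun y => by simp only [Function.comp]; ring
  have h5 := tendsto_nhds_unique h4 tendsto_const_nhds
  have hq : q = 0 := by linarith
  refine ⟨?_, hq⟩
  subst hq
  have h6 := (h.mul tendsto_inv_atTop_zero).mul tendsto_inv_atTop_zero
  have h7 : Tendsto (fun _ : ℝ => p) atTop (𝓝 (0 * 0 * 0)) := by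
    refine h6.congr' ?_
    filter_upwards [eventually_gt_atTop 0] with y hy
    field_simp
    ring
  have h8 := tendsto_nhds_unique h7 tendsto_const_nhds
  linarith

lemma aux_odd (x g : ℝ) : stgarchF (-x) g = - stgarchF x g := by
  unfold stgarchF
  have := Real.exp_pos (g * x)
  rw [mul_neg, Real.exp_neg]
  field_simp
  ring

lemma aux_inj (x g k : ℝ) (hx : x ≠ 0) (h : stgarchF x g = stgarchF x k) : g = k := by
  unfold stgarchF at h
  have h1 : 1 / (1 + Real.exp (g * x)) = 1 / (1 + Real.exp (k * x)) := by linarith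
  rw [one_div, one_div, inv_inj, add_right_inj, Real.exp_eq_exp] at h1
  exact mul_right_cancel₀ hx h1

/-- Identifiability of the transition parameters in the STGARCH model: if
`a σ² x² + (c σ² x² + B) F(σx, γ) − (c° σ² x² + B°) F(σx, γ°) = 0` for all real `x`,
where `σ > 0`, `γ° > 0`, `γ ≥ 0` and `(c°, B°) ≠ (0, 0)`, then
`a = 0`, `c = c°`, `B = B°` and `γ = γ°`. -/
theorem stgarch_transition_identifiable
    (σ γ γ0 a c c0 B B0 : ℝ) (hσ : 0 < σ) (hγ0 : 0 < γ0) (hγ : 0 ≤ γ)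
    (hne : (c0, B0) ≠ (0, 0))
    (h : ∀ x : ℝ,
      a * σ ^ 2 * x ^ 2 + (c * σ ^ 2 * x ^ 2 + B) * stgarchF (σ * x) γ
        - (c0 * σ ^ 2 * x ^ 2 + B0) * stgarchF (σ * x) γ0 = 0) :
    a = 0 ∧ c = c0 ∧ B = B0 ∧ γ = γ0 := by
  have h' : ∀ y : ℝ, a * y ^ 2 + (c * y ^ 2 + B) * stgarchF y γ
      - (c0 * y ^ 2 + B0) * stgarchF y γ0 = 0 := by
    intro y
    have := h (y / σ)
    have e : σ * (y / σ) = y := by field_simp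
    rw [e] at this
    have e2 : ∀ t : ℝ, t * σ ^ 2 * (y / σ) ^ 2 = t * y ^ 2 := by
      intro t
      field_simp
    rwa [e2, e2, e2] at this
  have ha : a = 0 := by
    have h1 := h' 1
    have h2 := h' (-1)
    rw [aux_odd, aux_odd] at h2
    nlinarith
  subst ha
  have hpt : ∃ y : ℝ, y ≠ 0 ∧ c0 * y ^ 2 + B0 ≠ 0 := by
    by_contra! hc
    have h1 := hc 1 (by norm_num)
    have h2 := hc 2 (by norm_num)
    apply hne
    rw [Prod.mk.injEq]
    constructor <;> linarith
  obtain ⟨y, hy, hy0⟩ := hpt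
  have hF0 : ∀ y, stgarchF y 0 = 0 := by
    intro y
    simp [stgarchF]
    norm_num
  have hγp : 0 < γ := by
    rcases hγ.lt_or_eq with h1 | h1
    · exact h1
    · exfalso
      subst h1
      have h2 := h' y
      rw [hF0] at h2
      have h3 : (c0 * y ^ 2 + B0) * stgarchF y γ0 = 0 := by linarith
      have h4 := (mul_eq_zero.mp h3).resolve_left hy0
      have := aux_inj y γ0 0 hy (by rw [h4, hF0])
      linarith
  have hlim := ((aux_tendsto γ c B hγp).sub (aux_tendsto γ0 c0 B0 hγ0)).const_mul 2
  rw [sub_zero, mul_zero] at hlim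
  obtain ⟨hc, hB⟩ := aux_poly (c - c0) (B - B0) (hlim.congr fun y => by
    have := h' y
    unfold stgarchF at this
    linarith)
  have hc : c = c0 := by linarith
  have hB : B = B0 := by linarith
  subst hc hB
  refine ⟨rfl, rfl, rfl, aux_inj y _ _ hy ?_⟩
  have := h' y
  apply mul_left_cancel₀ hy0
  linarith
end

section
/- Let σ > 0, γ > 0, γ° > 0 be real numbers and let c°, B° ∈ ℝ with (c°, B°) ≠ (0, 0). If (c°·σ²·x² + B°)·(1/(1+e^{γσx}) − 1/(1+e^{γ°σx})) = 0 for every x ∈ ℝ, then γ = γ°. -/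
/-- Identification of the smoothness parameter in the STGARCH model: if
`(c° σ² x² + B°)(1/(1+e^{γσx}) − 1/(1+e^{γ°σx})) = 0` for all real `x`, where
`σ > 0`, `γ > 0`, `γ° > 0` and `(c°, B°) ≠ (0, 0)`, then `γ = γ°`. -/
theorem stgarch_smoothness_identifiable
    (σ γ γ0 c0 B0 : ℝ) (hσ : 0 < σ) (hγ : 0 < γ) (hγ0 : 0 < γ0)
    (hne : (c0, B0) ≠ (0, 0))
    (h : ∀ x : ℝ,
      (c0 * σ ^ 2 * x ^ 2 + B0) *
        (1 / (1 + Real.exp (γ * σ * x)) - 1 / (1 + Real.exp (γ0 * σ * x))) = 0) :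
    γ = γ0 := by
  by_contra hg
  have key : ∀ x : ℝ, x ≠ 0 → c0 * σ ^ 2 * x ^ 2 + B0 = 0 := by
    intro x hx
    rcases mul_eq_zero.mp (h x) with h1 | h1
    · exact h1
    · exfalso
      apply hg
      rw [sub_eq_zero, one_div, one_div, inv_inj] at h1
      have h2 := Real.exp_injective (add_left_cancel h1)
      exact mul_right_cancel₀ hσ.ne' (mul_right_cancel₀ hx h2)
  have h1 := key 1 (by norm_num)
  have h2 := key 2 (by norm_num)
  have h3 : c0 * σ ^ 2 = 0 := by linarith
  have hc : c0 = 0 := by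
    rcases mul_eq_zero.mp h3 with h4 | h4
    · exact h4
    · exact absurd h4 (by positivity)
  have hB : B0 = 0 := by
    rw [h3] at h1
    linarith
  exact hne (by rw [hc, hB])
end

section
/- Let α° > 0, α ≥ 0 be real numbers and let γ, γ° ∈ [−1, 1]. If α°·(|x| − γ°·x)² = α·(|x| − γ·x)² for every x ∈ ℝ, then α = α° and γ = γ°. -/
/-- Identifiability of the AGARCH news impact function: if
`α° (|x| − γ° x)² = α (|x| − γ x)²` for all real `x`, where `α° > 0`, `α ≥ 0` and
`γ, γ° ∈ [−1, 1]`, then `α = α°` and `γ = γ°`. -/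
theorem agarch_news_impact_identifiable
    (α α0 γ γ0 : ℝ) (hα0 : 0 < α0) (hα : 0 ≤ α)
    (hγ : γ ∈ Set.Icc (-1 : ℝ) 1) (hγ0 : γ0 ∈ Set.Icc (-1 : ℝ) 1)
    (h : ∀ x : ℝ, α0 * (|x| - γ0 * x) ^ 2 = α * (|x| - γ * x) ^ 2) :
    α = α0 ∧ γ = γ0 := by
  obtain ⟨l, u⟩ := hγ
  obtain ⟨l0, u0⟩ := hγ0
  have h1 := h 1
  have h2 := h (-1)
  simp only [abs_one, abs_neg] at h1 h2
  have ea : √α0 ^ 2 = α0 := Real.sq_sqrt hα0.le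
  have eb : √α ^ 2 = α := Real.sq_sqrt hα
  have pa : 0 < √α0 := Real.sqrt_pos.2 hα0
  have pb : 0 ≤ √α := Real.sqrt_nonneg α
  have k1 : √α0 * (1 - γ0) = √α * (1 - γ) := by
    refine (sq_eq_sq₀ (mul_nonneg pa.le (by linarith)) (mul_nonneg pb (by linarith))).1 ?_
    rw [mul_pow, mul_pow, ea, eb]
    linarith
  have k2 : √α0 * (1 + γ0) = √α * (1 + γ) := by
    refine (sq_eq_sq₀ (mul_nonneg pa.le (by linarith)) (mul_nonneg pb (by linarith))).1 ?_
    rw [mul_pow, mul_pow, ea, eb]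
    linarith
  have e : √α = √α0 := by linarith
  refine ⟨by rw [← ea, ← eb, e], ?_⟩
  rw [e] at k2
  have := mul_left_cancel₀ pa.ne' k2
  linarith
end

section
/- Let θ° = (ω°, α₁°, α₂°, β°, l°) and θ = (ω, α₁, α₂, β, l) belong to Θ = (0,∞) × [0,1)³ × ℕ (so l, l° ≥ 1), and assume α₁° ≠ α₂°. Let S ⊆ ℝ be a set containing at least two distinct elements. If ω + α₁·m + (α₂ − α₁)·(m − l)⁺ + β·λ = ω° + α₁°·m + (α₂° − α₁°)·(m − l°)⁺ + β°·λ for every m ∈ ℕ₀ and every λ ∈ S, then θ = θ°, i.e., ω = ω°, α₁ = α₁°, α₂ = α₂°, β = β°, and l = l°. -/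
/-- Identifiability of the INTGARCH model parameters: suppose
`θ° = (ω°, α₁°, α₂°, β°, l°)` and `θ = (ω, α₁, α₂, β, l)` lie in
`(0,∞) × [0,1)³ × ℕ` with `α₁° ≠ α₂°`, and `S ⊆ ℝ` contains at least two points. If the
intensity functions coincide on `ℕ₀ × S`, then `θ = θ°`. -/
theorem intgarch_identifiable
    (ω ω0 α1 α10 α2 α20 β β0 : ℝ) (l l0 : ℕ)
    (hω : 0 < ω) (hω0 : 0 < ω0)
    (hα1 : α1 ∈ Set.Ico (0 : ℝ) 1) (hα10 : α10 ∈ Set.Ico (0 : ℝ) 1)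
    (hα2 : α2 ∈ Set.Ico (0 : ℝ) 1) (hα20 : α20 ∈ Set.Ico (0 : ℝ) 1)
    (hβ : β ∈ Set.Ico (0 : ℝ) 1) (hβ0 : β0 ∈ Set.Ico (0 : ℝ) 1)
    (hl : 1 ≤ l) (hl0 : 1 ≤ l0)
    (hne : α10 ≠ α20)
    (S : Set ℝ) (hS : ∃ a ∈ S, ∃ b ∈ S, a ≠ b)
    (h : ∀ m : ℕ, ∀ lam ∈ S,
      ω + α1 * m + (α2 - α1) * max ((m : ℝ) - l) 0 + β * lam =
        ω0 + α10 * m + (α20 - α10) * max ((m : ℝ) - l0) 0 + β0 * lam) :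
    ω = ω0 ∧ α1 = α10 ∧ α2 = α20 ∧ β = β0 ∧ l = l0 := by
  obtain ⟨a, ha, b, hb, hab⟩ := hS
  have hlr : (1 : ℝ) ≤ l := by exact_mod_cast hl
  have hl0r : (1 : ℝ) ≤ l0 := by exact_mod_cast hl0
  have e0a := h 0 a ha
  have e0b := h 0 b hb
  have e1 := h 1 a ha
  have e2 := h (l + l0) a ha
  have e3 := h (l + l0 + 1) a ha
  push_cast at e0a e0b e1 e2 e3
  rw [max_eq_right (by linarith), max_eq_right (by linarith)] at e0a e0b e1
  rw [max_eq_left (by linarith), max_eq_left (by linarith)] at e2 e3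
  have hβe : β = β0 := by
    have h1 : (β - β0) * (a - b) = 0 := by linarith
    rcases mul_eq_zero.mp h1 with h2 | h2
    · linarith
    · exact absurd (by linarith) hab
  subst hβe
  have hωe : ω = ω0 := by linarith
  subst hωe
  have hα1e : α1 = α10 := by linarith
  subst hα1e
  have hα2e : α2 = α20 := by linarith
  subst hα2e
  refine ⟨rfl, rfl, rfl, rfl, ?_⟩
  have h1 : (α2 - α1) * ((l : ℝ) - l0) = 0 := by linarith
  rcases mul_eq_zero.mp h1 with h2 | h2
  · exact absurd (by linarith) hne
  · exact_mod_cast sub_eq_zero.mp h2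
end

section
/- Let θ° = (ω°, α₁°, α₂°, β°, l°) and θ = (ω, α₁, α₂, β, l) belong to Θ = (0,∞) × [0,1)³ × ℕ (so l, l° ≥ 1), and assume α₁° = α₂°. Let S ⊆ ℝ be a set containing at least two distinct elements. If ω + α₁·m + (α₂ − α₁)·(m − l)⁺ + β·λ = ω° + α₁°·m + (α₂° − α₁°)·(m − l°)⁺ + β°·λ for every m ∈ ℕ₀ and every λ ∈ S, then ω = ω°, α₁ = α₁°, α₂ = α₂°, and β = β° (the threshold parameter l need not equal l°). -/
/-- Partial identifiability of the INTGARCH model when no threshold mechanism exists: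
suppose `θ° = (ω°, α₁°, α₂°, β°, l°)` and `θ = (ω, α₁, α₂, β, l)` lie in
`(0,∞) × [0,1)³ × ℕ` with `α₁° = α₂°`, and `S ⊆ ℝ` contains at least two points. If the
intensity functions coincide on `ℕ₀ × S`, then all the parameters except possibly the
threshold parameter `l` coincide. -/
theorem intgarch_partially_identifiable
    (ω ω0 α1 α10 α2 α20 β β0 : ℝ) (l l0 : ℕ)
    (hω : 0 < ω) (hω0 : 0 < ω0)
    (hα1 : α1 ∈ Set.Ico (0 : ℝ) 1) (hα10 : α10 ∈ Set.Ico (0 : ℝ) 1)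
    (hα2 : α2 ∈ Set.Ico (0 : ℝ) 1) (hα20 : α20 ∈ Set.Ico (0 : ℝ) 1)
    (hβ : β ∈ Set.Ico (0 : ℝ) 1) (hβ0 : β0 ∈ Set.Ico (0 : ℝ) 1)
    (hl : 1 ≤ l) (hl0 : 1 ≤ l0)
    (heq : α10 = α20)
    (S : Set ℝ) (hS : ∃ a ∈ S, ∃ b ∈ S, a ≠ b)
    (h : ∀ m : ℕ, ∀ lam ∈ S,
      ω + α1 * m + (α2 - α1) * max ((m : ℝ) - l) 0 + β * lam =
        ω0 + α10 * m + (α20 - α10) * max ((m : ℝ) - l0) 0 + β0 * lam) :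
    ω = ω0 ∧ α1 = α10 ∧ α2 = α20 ∧ β = β0 := by
  subst heq
  obtain ⟨a, ha, b, hb, hab⟩ := hS
  have hl' : (1 : ℝ) ≤ l := by exact_mod_cast hl
  have e0 := h 0 a ha
  have e0b := h 0 b hb
  have e1 := h 1 a ha
  have e2 := h (l + 1) a ha
  have m0 : max (((0 : ℕ) : ℝ) - l) 0 = 0 := max_eq_right (by push_cast; linarith)
  have m1 : max (((1 : ℕ) : ℝ) - l) 0 = 0 := max_eq_right (by push_cast; linarith)
  have m2 : max (((l + 1 : ℕ) : ℝ) - l) 0 = 1 := by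
    rw [max_eq_left] <;> push_cast <;> linarith
  rw [m0] at e0 e0b
  rw [m1] at e1
  rw [m2] at e2
  push_cast at e0 e0b e1 e2
  have hβe : β = β0 := by
    have : (β - β0) * (a - b) = 0 := by linarith
    rcases mul_eq_zero.mp this with h1 | h1
    · linarith
    · exact absurd (by linarith) hab
  subst hβe
  have hωe : ω = ω0 := by linarith
  have hαe : α1 = α10 := by linarith
  subst hαe
  exact ⟨hωe, rfl, by linarith, rfl⟩
end

section
/- Fix integers p ≥ 1 and M ≥ 1. For a parameter θ = (β₀, β₁, …, β_M, γ₁, …, γ_M, c₁, …, c_M, d) with β_i ∈ ℝ^{p+1} for 0 ≤ i ≤ M, γ_i, c_i ∈ ℝ, and d ∈ {1,…,p}, define m(x, θ) = β₀ᵀx̃ + Σ_{i=1}^M β_iᵀx̃ · G(x_d; γ_i, c_i) for x = (x₁,…,x_p) ∈ ℝ^p, where x̃ = (1, x₁, …, x_p) ∈ ℝ^{p+1}. Let θ° and θ be two such parameters satisfying: (a) β_i° ≠ 0 ∈ ℝ^{p+1} for every i = 1,…,M; (c) γ_i° > 0 and γ_i > 0 for all i, −∞ < c₁° < ⋯ <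 c_M° < ∞ and −∞ < c₁ < ⋯ < c_M < ∞. Let Z be a random vector in ℝ^p on a probability space whose distribution has support equal to all of ℝ^p. If m(Z, θ°) = m(Z, θ) almost surely, then θ = θ°. -/
open MeasureTheory

/-- The support of a Borel measure: the set of points all of whose open neighborhoods have
positive measure. -/
def measSupport {α : Type*} [TopologicalSpace α] [MeasurableSpace α]
    (μ : MeasureTheory.Measure α) : Set α :=
  {x | ∀ U : Set α, IsOpen U → x ∈ U → 0 < μ U}

/-- The conditional mean function of the multiple-regime STAR model of order `p` with
`M + 1` regimes: `m(x, θ) = β₀ᵀ x̃ + ∑ᵢ βᵢᵀ x̃ · G(x_d; γᵢ, cᵢ)` with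
`x̃ = (1, x₁, …, x_p)`. -/
noncomputable def starMean (p M : ℕ) (β0 : Fin (p + 1) → ℝ)
    (β : Fin M → Fin (p + 1) → ℝ) (γ c : Fin M → ℝ) (d : Fin p)
    (x : Fin p → ℝ) : ℝ :=
  (∑ j, β0 j * (Fin.cons 1 x : Fin (p + 1) → ℝ) j) +
    ∑ i, (∑ j, β i j * (Fin.cons 1 x : Fin (p + 1) → ℝ) j) * logisticG (γ i) (c i) (x d)


/-- Complex denominator of the logistic function. -/
noncomputable def logDen (γ c : ℝ) (w : ℂ) : ℂ := 1 + Complex.exp (-(γ : ℂ) * (w - c))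

lemma logDen_pole {γ c : ℝ} (hγ : 0 < γ) :
    logDen γ c (c + (Real.pi / γ : ℝ) * Complex.I) = 0 := by
  have h : (γ : ℂ) ≠ 0 := by exact_mod_cast hγ.ne'
  have : -(γ : ℂ) * ((c + (Real.pi / γ : ℝ) * Complex.I) - c) = -(Real.pi * Complex.I) := by
    push_cast
    field_simp
    ring
  rw [logDen, this, Complex.exp_neg, Complex.exp_pi_mul_I]
  norm_num

lemma logDen_other {γ c γ' c' : ℝ} (hγ : 0 < γ) (hγ' : 0 < γ') (hle : γ' ≤ γ)
    (h : logDen γ' c' (c + (Real.pi / γ : ℝ) * Complex.I) = 0) : γ' = γ ∧ c' = c := by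
  have h1 : Complex.exp (-(γ' : ℂ) * ((c + (Real.pi / γ : ℝ) * Complex.I) - c')) = -1 := by
    unfold logDen at h
    linear_combination h
  have e : -(γ' : ℂ) * ((c + (Real.pi / γ : ℝ) * Complex.I) - c')
      = ((-γ' * (c - c') : ℝ) : ℂ) + ((-(γ' * (Real.pi / γ)) : ℝ) : ℂ) * Complex.I := by
    push_cast
    ring
  rw [e] at h1
  have h2 : Real.exp (-γ' * (c - c')) = 1 := by
    have := congrArg norm h1
    rw [Complex.norm_exp] at this
    simpa using this
  have h3 : -γ' * (c - c') = 0 := by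
    simpa using h2
  have hc : c' = c := by
    have : c - c' = 0 := by
      rcases mul_eq_zero.1 h3 with h | h
      · linarith
      · exact h
    linarith
  refine ⟨?_, hc⟩
  rw [h3] at h1
  have h4 : Real.cos (γ' * (Real.pi / γ)) = -1 := by
    have := congrArg Complex.re h1
    rw [Complex.exp_re] at this
    simpa using this
  have h5 : γ' * (Real.pi / γ) = Real.pi := by
    apply Real.injOn_cos
    · constructor
      · positivity
      · rw [mul_div_assoc', div_le_iff₀ hγ]
        nlinarith [Real.pi_pos]
    · exact ⟨Real.pi_pos.le, le_rfl⟩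
    · simpa using h4
  have := Real.pi_pos
  field_simp at h5
  nlinarith

lemma core {ι : Type*} [DecidableEq ι] (s : Finset ι) (γ c a b : ι → ℝ) (A B : ℝ)
    (hγ : ∀ i ∈ s, 0 < γ i)
    (hinj : ∀ i ∈ s, ∀ j ∈ s, γ i = γ j → c i = c j → i = j)
    (h : ∀ y : ℝ, A + B * y + ∑ i ∈ s, (a i + b i * y) * logisticG (γ i) (c i) y = 0) :
    ∀ i ∈ s, a i = 0 ∧ b i = 0 := by
  classical
  by_contra hcon
  push Not at hcon
  obtain ⟨i1, hi1, hi1'⟩ := hcon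
  set T := s.filter (fun i => ¬ (a i = 0 ∧ b i = 0)) with hT
  have hTs : T ⊆ s := Finset.filter_subset _ _
  obtain ⟨i0, hi0, hmax⟩ := Finset.exists_max_image T γ
    ⟨i1, by rw [hT, Finset.mem_filter]; exact ⟨hi1, by tauto⟩⟩
  have hT' : ∀ y : ℝ, A + B * y + ∑ i ∈ T, (a i + b i * y) * logisticG (γ i) (c i) y = 0 := by
    intro y
    rw [← h y, hT, Finset.sum_filter_of_ne]
    intro i _ hne hab
    apply hne
    simp [hab.1, hab.2]
  let F : ℂ → ℂ := fun w => (A + B * w) * ∏ j ∈ T, logDen (γ j) (c j) w +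
    ∑ i ∈ T, (a i + b i * w) * ∏ j ∈ T.erase i, logDen (γ j) (c j) w
  have hF : Differentiable ℂ F := by
    unfold F logDen
    fun_prop
  have hFr : ∀ y : ℝ, F y = 0 := by
    intro y
    have hD : ∀ i, logDen (γ i) (c i) y ≠ 0 := by
      intro i
      have : logDen (γ i) (c i) y = ((1 + Real.exp (-γ i * (y - c i)) : ℝ) : ℂ) := by
        unfold logDen
        push_cast
        rfl
      rw [this]
      have := Real.exp_pos (-γ i * (y - c i))
      exact_mod_cast (by linarith : 0 < 1 + Real.exp (-γ i * (y - c i))).ne'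
    have h1 : F y = (∏ j ∈ T, logDen (γ j) (c j) y) *
        (A + B * y + ∑ i ∈ T, (a i + b i * y) * (1 / logDen (γ i) (c i) y)) := by
      unfold F
      rw [mul_add, Finset.mul_sum]
      congr 1
      · ring
      · apply Finset.sum_congr rfl
        intro i hi
        rw [← Finset.mul_prod_erase T _ hi]
        have := hD i
        field_simp
    rw [h1]
    have h2 := congrArg (fun r : ℝ => (r : ℂ)) (hT' y)
    simp only [logisticG] at h2
    push_cast at h2
    unfold logDen
    rw [h2, mul_zero]
  have hF0 : F = 0 := by
    have h1 : AnalyticOnNhd ℂ F Set.univ := fun z _ => hF.analyticAt z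
    have h2 : AnalyticOnNhd ℂ (0 : ℂ → ℂ) Set.univ := fun z _ => analyticAt_const
    refine h1.eq_of_frequently_eq (z₀ := 0) h2 ?_
    have ht : Filter.Tendsto (fun n : ℕ => (((1 : ℝ) / ((n : ℝ) + 1) : ℝ) : ℂ)) Filter.atTop
        (nhdsWithin 0 {0}ᶜ) := by
      apply tendsto_nhdsWithin_of_tendsto_nhds_of_eventually_within
      · have := (Complex.continuous_ofReal.tendsto 0).comp
          (tendsto_one_div_add_atTop_nhds_zero_nat (𝕜 := ℝ))
        simpa [Function.comp_def] using this
      · refine Filter.Eventually.of_forall fun n => ?_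
        have : (1 : ℝ) / ((n : ℝ) + 1) ≠ 0 := by positivity
        exact fun h0 => this (Complex.ofReal_eq_zero.1 h0)
    apply ht.frequently
    exact Filter.Frequently.of_forall fun n => hFr _
  set w : ℂ := c i0 + (Real.pi / γ i0 : ℝ) * Complex.I with hw
  have hγ0 := hγ i0 (hTs hi0)
  have hp0 : logDen (γ i0) (c i0) w = 0 := logDen_pole hγ0
  have hFw : F w = 0 := by rw [hF0]; rfl
  have h3 : F w = (a i0 + b i0 * w) * ∏ j ∈ T.erase i0, logDen (γ j) (c j) w := by
    unfold F
    rw [Finset.prod_eq_zero hi0 hp0, mul_zero, zero_add]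
    apply Finset.sum_eq_single_of_mem i0 hi0
    intro j hj hne
    rw [Finset.prod_eq_zero (Finset.mem_erase.2 ⟨hne.symm, hi0⟩) hp0, mul_zero]
  rw [hFw] at h3
  have h4 : ∏ j ∈ T.erase i0, logDen (γ j) (c j) w ≠ 0 := by
    rw [Finset.prod_ne_zero_iff]
    intro j hj h0
    rw [Finset.mem_erase] at hj
    obtain ⟨e1, e2⟩ := logDen_other hγ0 (hγ j (hTs hj.2)) (hmax j hj.2) h0
    exact hj.1 (hinj _ (hTs hj.2) _ (hTs hi0) e1 e2)
  have h5 : (a i0 : ℂ) + b i0 * w = 0 := by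
    rcases mul_eq_zero.1 h3.symm with h | h
    · exact h
    · exact absurd h h4
  have him : b i0 * (Real.pi / γ i0) = 0 := by
    have := congrArg Complex.im h5
    rw [hw] at this
    simp only [Complex.add_im, Complex.mul_im, Complex.ofReal_im, Complex.ofReal_re,
      Complex.I_im, Complex.I_re, Complex.zero_im, Complex.add_re, Complex.mul_re] at this
    linarith
  have hb : b i0 = 0 := by
    have : Real.pi / γ i0 ≠ 0 := (div_pos Real.pi_pos hγ0).ne'
    exact (mul_eq_zero.1 him).resolve_right this
  have ha : a i0 = 0 := by
    rw [hb] at h5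
    simpa using h5
  exact (Finset.mem_filter.1 hi0).2 ⟨ha, hb⟩

lemma affine_zero {A B : ℝ} (h : ∀ y : ℝ, A + B * y = 0) : A = 0 ∧ B = 0 := by
  have h0 := h 0
  have h1 := h 1
  constructor <;> linarith

lemma core_fiber {ι : Type*} [Fintype ι] (γ c a b : ι → ℝ) (A B : ℝ)
    (hγ : ∀ i, 0 < γ i)
    (h : ∀ y : ℝ, A + B * y + ∑ i, (a i + b i * y) * logisticG (γ i) (c i) y = 0) (q : ℝ × ℝ)
    (hq : ∃ i, (γ i, c i) = q) :
    (∑ i, if (γ i, c i) = q then a i else 0) = 0 ∧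
    (∑ i, if (γ i, c i) = q then b i else 0) = 0 := by
  classical
  let g : ι → ℝ × ℝ := fun i => (γ i, c i)
  have := core (Finset.univ.image g) Prod.fst Prod.snd
    (fun q => ∑ i, if g i = q then a i else 0) (fun q => ∑ i, if g i = q then b i else 0) A B
    (by
      intro i hi
      obtain ⟨j, -, rfl⟩ := Finset.mem_image.1 hi
      exact hγ j)
    (fun i _ j _ e1 e2 => Prod.ext e1 e2)
    (by
      intro y
      refine Eq.trans ?_ (h y)
      congr 1
      rw [← Finset.sum_fiberwise_of_maps_to (s := Finset.univ) (t := Finset.univ.image g) (g := g)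
        (fun i _ => Finset.mem_image_of_mem g (Finset.mem_univ i))]
      apply Finset.sum_congr rfl
      intro q _
      rw [Finset.sum_mul, ← Finset.sum_add_distrib, Finset.sum_mul, Finset.sum_filter]
      apply Finset.sum_congr rfl
      intro i _
      by_cases hi : g i = q
      · subst hi
        simp [g]
      · simp [hi])
  obtain ⟨i, hi⟩ := hq
  convert this q (Finset.mem_image.2 ⟨i, Finset.mem_univ _, hi⟩)

/-- The affine form `vᵀ x̃`. -/
noncomputable def aff {p : ℕ} (v : Fin (p + 1) → ℝ) (x : Fin p → ℝ) : ℝ :=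
  ∑ j, v j * (Fin.cons 1 x : Fin (p + 1) → ℝ) j

lemma aff_eq {p : ℕ} (v : Fin (p + 1) → ℝ) (x : Fin p → ℝ) :
    aff v x = v 0 + ∑ j : Fin p, v j.succ * x j := by
  simp [aff, Fin.sum_univ_succ]

lemma aff_sub {p : ℕ} (v u : Fin (p + 1) → ℝ) (x : Fin p → ℝ) :
    aff (v - u) x = aff v x - aff u x := by
  simp [aff, sub_mul]

lemma aff_update {p : ℕ} (v : Fin (p + 1) → ℝ) (x : Fin p → ℝ) (d : Fin p) (y : ℝ) :
    aff v (Function.update x d y) = aff v (Function.update x d 0) + v d.succ * y := by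
  have key : ∀ z : ℝ, ∑ j : Fin p, v j.succ * Function.update x d z j
      = v d.succ * z + ∑ j ∈ Finset.univ.erase d, v j.succ * x j := by
    intro z
    rw [← Finset.add_sum_erase _ _ (Finset.mem_univ d), Function.update_self]
    congr 1
    apply Finset.sum_congr rfl
    intro j hj
    rw [Function.update_of_ne (Finset.ne_of_mem_erase hj)]
  rw [aff_eq, aff_eq, key, key]
  ring

lemma aff_zero {p : ℕ} (v : Fin (p + 1) → ℝ) (h : ∀ x, aff v x = 0) : v = 0 := by
  have h0 : v 0 = 0 := by simpa [aff_eq] using h 0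
  funext j
  refine Fin.cases h0 (fun k => ?_) j
  have := h (Pi.single k 1)
  simpa [aff_eq, h0, Pi.single_apply] using this

lemma aff_zero' {p : ℕ} (v : Fin (p + 1) → ℝ) (d : Fin p)
    (h : ∀ x, aff v (Function.update x d 0) = 0 ∧ v d.succ = 0) : v = 0 := by
  apply aff_zero
  intro x
  have := aff_update v x d (x d)
  rw [Function.update_eq_self, (h x).1, (h x).2] at this
  simpa using this

lemma starMean_eq (p M : ℕ) (β0 : Fin (p + 1) → ℝ)
    (β : Fin M → Fin (p + 1) → ℝ) (γ c : Fin M → ℝ) (d : Fin p) (x : Fin p → ℝ) :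
    starMean p M β0 β γ c d x =
      aff β0 x + ∑ i, aff (β i) x * logisticG (γ i) (c i) (x d) := rfl

lemma logisticG_continuous (γ c : ℝ) : Continuous (logisticG γ c) := by
  unfold logisticG
  refine continuous_const.div (by fun_prop) ?_
  intro x
  positivity

lemma aff_continuous {p : ℕ} (v : Fin (p + 1) → ℝ) : Continuous (aff v) := by
  have : aff v = fun x => v 0 + ∑ j : Fin p, v j.succ * x j := funext (aff_eq v)
  rw [this]
  fun_prop

lemma starMean_continuous (p M : ℕ) (β0 : Fin (p + 1) → ℝ)
    (β : Fin M → Fin (p + 1) → ℝ) (γ c : Fin M → ℝ) (d : Fin p) :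
    Continuous (starMean p M β0 β γ c d) := by
  have : starMean p M β0 β γ c d = fun x => 
      aff β0 x + ∑ i, aff (β i) x * logisticG (γ i) (c i) (x d) := rfl
  rw [this]
  refine (aff_continuous _).add (continuous_finsetSum _ fun i _ => ?_)
  exact (aff_continuous _).mul ((logisticG_continuous _ _).comp (continuous_apply d))

lemma everywhere {Ω : Type*} [MeasurableSpace Ω] (P : Measure Ω) (p : ℕ)
    (Z : Ω → (Fin p → ℝ)) (hZ : Measurable Z)
    (hsupp : measSupport (P.map Z) = Set.univ) (f g : (Fin p → ℝ) → ℝ)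
    (hf : Continuous f) (hg : Continuous g) (h : ∀ᵐ ω ∂P, f (Z ω) = g (Z ω)) (x : Fin p → ℝ) :
    f x = g x := by
  by_contra hne
  have hU : IsOpen {x | f x ≠ g x} := isOpen_ne_fun hf hg
  have hx : x ∈ measSupport (P.map Z) := by rw [hsupp]; trivial
  have h1 := hx _ hU hne
  rw [Measure.map_apply hZ hU.measurableSet] at h1
  exact h1.ne' (ae_iff.1 h)

/-- Identifiability of the multiple-regime STAR model: under (a) nondegenerate true regime
coefficients, (c) positive smoothing parameters and strictly increasing thresholds for
both parameter vectors, and a regressor `Z` whose distribution has full support `ℝᵖ`, if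
the conditional means coincide almost surely then the parameters coincide. -/
theorem star_identifiable
    {Ω : Type*} [MeasurableSpace Ω] (P : Measure Ω) [IsProbabilityMeasure P]
    (p M : ℕ) (hp : 1 ≤ p) (hM : 1 ≤ M)
    (β0t : Fin (p + 1) → ℝ) (βt : Fin M → Fin (p + 1) → ℝ) (γt ct : Fin M → ℝ)
    (dt : Fin p)
    (β0 : Fin (p + 1) → ℝ) (β : Fin M → Fin (p + 1) → ℝ) (γ c : Fin M → ℝ) (d : Fin p)
    (ha : ∀ i, βt i ≠ 0)
    (hγt : ∀ i, 0 < γt i) (hγ : ∀ i, 0 < γ i)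
    (hct : StrictMono ct) (hc : StrictMono c)
    (Z : Ω → (Fin p → ℝ)) (hZ : Measurable Z)
    (hsupp : measSupport (P.map Z) = Set.univ)
    (heq : ∀ᵐ ω ∂P,
      starMean p M β0t βt γt ct dt (Z ω) = starMean p M β0 β γ c d (Z ω)) :
    β0 = β0t ∧ β = βt ∧ γ = γt ∧ c = ct ∧ d = dt := by
  classical
  have heq' : ∀ x, aff β0t x + ∑ i, aff (βt i) x * logisticG (γt i) (ct i) (x dt) =
      aff β0 x + ∑ i, aff (β i) x * logisticG (γ i) (c i) (x d) :=
    everywhere P p Z hZ hsupp _ _ (starMean_continuous p M β0t βt γt ct dt)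
      (starMean_continuous p M β0 β γ c d) heq
  have hd : d = dt := by
    by_contra hne
    refine ha ⟨0, hM⟩ (aff_zero' _ dt fun x => ?_)
    refine core Finset.univ γt ct (fun i => aff (βt i) (Function.update x dt 0))
      (fun i => βt i dt.succ)
      (aff β0t (Function.update x dt 0) - aff β0 (Function.update x dt 0)
        - ∑ i, aff (β i) (Function.update x dt 0) * logisticG (γ i) (c i) (x d))
      (β0t dt.succ - β0 dt.succ - ∑ i, β i dt.succ * logisticG (γ i) (c i) (x d))
      (fun i _ => hγt i) (fun i _ j _ _ e => hct.injective e) ?_ ⟨0, hM⟩ (Finset.mem_univ _)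
    intro y
    have := heq' (Function.update x dt y)
    rw [Function.update_self, Function.update_of_ne hne, aff_update β0t, aff_update β0] at this
    simp only [aff_update (βt _) x dt y, aff_update (β _) x dt y] at this
    have e2 : ∑ i, (aff (β i) (Function.update x dt 0) + β i dt.succ * y) *
          logisticG (γ i) (c i) (x d) =
        ∑ i, aff (β i) (Function.update x dt 0) * logisticG (γ i) (c i) (x d) +
        (∑ i, β i dt.succ * logisticG (γ i) (c i) (x d)) * y := by
      rw [Finset.sum_mul, ← Finset.sum_add_distrib]
      exact Finset.sum_congr rfl fun i _ => by ring
    rw [e2] at this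
    linear_combination this
  subst hd
  have hex : ∀ i, ∃ j, γ j = γt i ∧ c j = ct i := by
    intro i
    by_contra hno
    push Not at hno
    refine ha i (aff_zero' _ d fun x => ?_)
    have := core_fiber (ι := Fin M ⊕ Fin M) (Sum.elim γt γ) (Sum.elim ct c)
      (Sum.elim (fun i => aff (βt i) (Function.update x d 0))
        (fun i => - aff (β i) (Function.update x d 0)))
      (Sum.elim (fun i => βt i d.succ) (fun i => - β i d.succ))
      (aff β0t (Function.update x d 0) - aff β0 (Function.update x d 0))
      (β0t d.succ - β0 d.succ)
      (by rintro (i | i) <;> simp [hγ, hγt])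
      (by
        intro y
        have := heq' (Function.update x d y)
        rw [Function.update_self, aff_update β0t, aff_update β0] at this
        simp only [aff_update (βt _) x d y, aff_update (β _) x d y] at this
        rw [Fintype.sum_sum_type]
        simp only [Sum.elim_inl, Sum.elim_inr]
        have e2 : ∑ i, (-aff (β i) (Function.update x d 0) + -β i d.succ * y) *
              logisticG (γ i) (c i) y =
            - ∑ i, (aff (β i) (Function.update x d 0) + β i d.succ * y) *
              logisticG (γ i) (c i) y := by
          rw [← Finset.sum_neg_distrib]
          exact Finset.sum_congr rfl fun i _ => by ring
        rw [e2]
        linear_combination this)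
      (γt i, ct i) ⟨Sum.inl i, rfl⟩
    rw [Fintype.sum_sum_type, Fintype.sum_sum_type] at this
    simp only [Sum.elim_inl, Sum.elim_inr] at this
    have k1 : ∀ j, ((γt j, ct j) = (γt i, ct i)) ↔ j = i := fun j =>
      ⟨fun e => hct.injective (Prod.ext_iff.1 e).2, fun e => by rw [e]⟩
    have k2 : ∀ j, ¬ ((γ j, c j) = (γt i, ct i)) := fun j e =>
      hno j (Prod.ext_iff.1 e).1 (Prod.ext_iff.1 e).2
    simp only [k1, k2, if_false, Finset.sum_const_zero, add_zero, Finset.sum_ite_eq',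
      Finset.mem_univ, if_true] at this
    exact this
  choose σ hσγ hσc using hex
  have hσm : StrictMono σ := by
    intro i j hij
    rw [← hc.lt_iff_lt, hσc, hσc]
    exact hct hij
  have hσ : σ = id := by
    apply (StrictMono.range_inj hσm strictMono_id).1
    rw [Set.range_id, (Finite.surjective_of_injective hσm.injective).range_eq]
  have hγe : γ = γt := funext fun i => by simpa [hσ] using hσγ i
  have hce : c = ct := funext fun i => by simpa [hσ] using hσc i
  subst hγe hce
  have hβ : β = βt := by
    funext i
    symm
    rw [← sub_eq_zero]
    refine aff_zero' _ d fun x => ?_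
    refine core Finset.univ γ c (fun i => aff (βt i - β i) (Function.update x d 0))
      (fun i => (βt i - β i) d.succ)
      (aff (β0t - β0) (Function.update x d 0)) ((β0t - β0) d.succ)
      (fun i _ => hγ i) (fun i _ j _ _ e => hc.injective e) ?_ i (Finset.mem_univ _)
    intro y
    have := heq' (Function.update x d y)
    rw [Function.update_self] at this
    simp only [← aff_update]
    simp only [aff_sub, sub_mul, Finset.sum_sub_distrib]
    linear_combination this
  subst hβ
  refine ⟨?_, rfl, rfl, rfl, rfl⟩
  symm
  rw [← sub_eq_zero]
  apply aff_zero
  intro x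
  rw [aff_sub]
  linear_combination heq' x
end

section
/- Let (γ₁,c₁),…,(γ_k,c_k) be pairwise distinct pairs with γ_i > 0, let (γ'₁,c'₁),…,(γ'_{k'},c'_{k'}) be pairwise distinct pairs with γ'_j > 0, and let p₁,…,p_k > 0 and q₁,…,q_{k'} > 0 be positive weights. If Σ_{i=1}^k p_i · G(y; γ_i, c_i) = Σ_{j=1}^{k'} q_j · G(y; γ'_j, c'_j) for every y ∈ ℝ, then k = k' and there is a permutation π of {1,…,k} such that (p_i, γ_i, c_i) = (q_{π(i)}, γ'_{π(i)}, c'_{π(i)}) for every i; that is, finite mixtures of logistic distributions are identifiable. -/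
theorem logistic_linindep_aux (s : Finset (ℝ × ℝ)) (a : ℝ × ℝ → ℝ) (hs : ∀ p ∈ s, 0 < p.1)
    (h : ∀ y : ℝ, ∑ p ∈ s, a p * logisticG p.1 p.2 y = 0) : ∀ p ∈ s, a p = 0 := by
  classical
  by_contra hcon
  push Not at hcon
  obtain ⟨p0, hp0, hap0⟩ := hcon
  set t := s.filter (fun p => a p ≠ 0) with ht
  have hne : t.Nonempty := ⟨p0, by simp [ht, hp0, hap0]⟩
  obtain ⟨m, hm, hmax⟩ := t.exists_max_image (fun p => p.1) hne
  have htpos : ∀ p ∈ t, 0 < p.1 := fun p hp => hs p (Finset.mem_filter.1 hp).1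
  have ham : a m ≠ 0 := (Finset.mem_filter.1 hm).2
  have hmpos := htpos m hm
  have ht0 : ∀ y : ℝ, ∑ p ∈ t, a p * logisticG p.1 p.2 y = 0 := by
    intro y
    rw [← h y, ht]
    apply Finset.sum_filter_of_ne
    intro p _ hp h0
    simp [h0] at hp
  let D : ℝ × ℝ → ℂ → ℂ := fun p z => 1 + Complex.exp (-(p.1 : ℂ) * (z - (p.2 : ℂ)))
  let P : ℂ → ℂ := fun z => ∑ p ∈ t, (a p : ℂ) * ∏ q ∈ t.erase p, D q z
  have hD : ∀ p, Differentiable ℂ (D p) := by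
    intro p
    simp only [D]
    fun_prop
  have hP : Differentiable ℂ P := by
    simp only [P]
    refine Differentiable.fun_sum fun p _ => ?_
    refine Differentiable.const_mul ?_ _
    exact Differentiable.fun_finsetProd fun q _ => hD q
  have hreal : ∀ y : ℝ, P (y : ℂ) = 0 := by
    intro y
    have hd : ∀ p : ℝ × ℝ, D p (y : ℂ) = ((1 + Real.exp (-p.1 * (y - p.2)) : ℝ) : ℂ) := by
      intro p
      simp [D]
    have hd0 : ∀ p : ℝ × ℝ, (1 + Real.exp (-p.1 * (y - p.2)) : ℝ) ≠ 0 := by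
      intro p
      positivity
    simp only [P, hd]
    norm_cast
    have : ∑ p ∈ t, a p * ∏ q ∈ t.erase p, (1 + Real.exp (-q.1 * (y - q.2)))
        = (∏ q ∈ t, (1 + Real.exp (-q.1 * (y - q.2)))) * ∑ p ∈ t, a p * logisticG p.1 p.2 y := by
      rw [Finset.mul_sum]
      refine Finset.sum_congr rfl fun p hp => ?_
      rw [← Finset.mul_prod_erase t _ hp, logisticG]
      have := hd0 p
      field_simp
    rw [this, ht0 y, mul_zero]
  have hzero : P = 0 := by
    have hA : AnalyticOnNhd ℂ P Set.univ := fun z _ => hP.analyticAt z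
    have hB : AnalyticOnNhd ℂ (0 : ℂ → ℂ) Set.univ := fun z _ => analyticAt_const
    refine hA.eq_of_frequently_eq (z₀ := 0) hB ?_
    have hu : Filter.Tendsto (fun n : ℕ => (((1 / ((n : ℝ) + 1) : ℝ)) : ℂ)) Filter.atTop
        (nhdsWithin 0 {0}ᶜ) := by
      refine tendsto_nhdsWithin_iff.2 ⟨?_, ?_⟩
      · have := (Complex.continuous_ofReal.tendsto 0).comp
          (tendsto_one_div_add_atTop_nhds_zero_nat (𝕜 := ℝ))
        rw [Complex.ofReal_zero] at this
        exact this
      · refine Filter.Eventually.of_forall fun n => ?_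
        have : (1 / ((n : ℝ) + 1) : ℝ) ≠ 0 := by positivity
        simpa only [Set.mem_compl_iff, Set.mem_singleton_iff, Complex.ofReal_eq_zero] using this
    exact hu.frequently (Filter.Frequently.of_forall fun n => hreal _)
  set z0 : ℂ := (m.2 : ℂ) + ((Real.pi / m.1 : ℝ) : ℂ) * Complex.I with hz0
  have hm0 : D m z0 = 0 := by
    have : -(m.1 : ℂ) * (z0 - (m.2 : ℂ)) = -(Real.pi * Complex.I) := by
      have : (m.1 : ℂ) ≠ 0 := by exact_mod_cast hmpos.ne'
      rw [hz0]; push_cast; field_simp; ring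
    simp only [D, this, Complex.exp_neg, Complex.exp_pi_mul_I]
    norm_num
  have hq0 : ∀ q ∈ t.erase m, D q z0 ≠ 0 := by
    intro q hq hD0
    obtain ⟨hqm, hqt⟩ := Finset.mem_erase.1 hq
    have hqpos := htpos q hqt
    have hle : q.1 ≤ m.1 := hmax q hqt
    have he : Complex.exp (-(q.1 : ℂ) * (z0 - (q.2 : ℂ))) = Complex.exp (Real.pi * Complex.I) := by
      rw [Complex.exp_pi_mul_I]
      exact eq_neg_of_add_eq_zero_right hD0
    obtain ⟨n, hn⟩ := Complex.exp_eq_exp_iff_exists_int.1 he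
    have hre := congrArg Complex.re hn
    have him := congrArg Complex.im hn
    simp [hz0] at hre him
    have hc : m.2 = q.2 := by
      rcases hre with h1 | h1
      · exact absurd h1 hqpos.ne'
      · linarith
    have him' : q.1 = -(1 + 2 * n) * m.1 := by
      have hpi := Real.pi_pos
      field_simp at him
      linarith
    have hn1 : n = -1 := by
      have h1 : (0 : ℝ) < -(1 + 2 * n) := by
        by_contra hc
        push Not at hc
        nlinarith
      have h2 : -(1 + 2 * (n : ℝ)) ≤ 1 := by
        by_contra hc
        push Not at hc
        nlinarith
      have h3 : (0 : ℤ) < -(1 + 2 * n) := by exact_mod_cast h1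
      have h4 : -(1 + 2 * n) ≤ (1 : ℤ) := by exact_mod_cast h2
      omega
    apply hqm
    refine Prod.ext ?_ hc.symm
    rw [him', hn1]; push_cast; ring
  have hfin : P z0 = (a m : ℂ) * ∏ q ∈ t.erase m, D q z0 := by
    simp only [P]
    refine Finset.sum_eq_single_of_mem m hm fun p hp hpm => ?_
    rw [Finset.prod_eq_zero (Finset.mem_erase.2 ⟨hpm.symm, hm⟩) hm0, mul_zero]
  rw [hzero] at hfin
  rcases mul_eq_zero.1 hfin.symm with h1 | h1
  · exact ham (by exact_mod_cast h1)
  · exact Finset.prod_ne_zero_iff.2 hq0 h1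

theorem logistic_match_aux {k k' : ℕ} (θ : Fin k → ℝ × ℝ) (θ' : Fin k' → ℝ × ℝ)
    (pw : Fin k → ℝ) (qw : Fin k' → ℝ)
    (hp : ∀ i, 0 < pw i)
    (hinj : Function.Injective θ) (hinj' : Function.Injective θ')
    (h : ∀ p, (∑ i, if θ i = p then pw i else 0) = ∑ j, if θ' j = p then qw j else 0) (i : Fin k) :
    ∃ j, θ' j = θ i ∧ pw i = qw j := by
  have h1 := h (θ i)
  simp only [hinj.eq_iff, Finset.sum_ite_eq', Finset.mem_univ, if_true] at h1
  by_cases hj : ∃ j, θ' j = θ i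
  · obtain ⟨j, hj⟩ := hj
    refine ⟨j, hj, ?_⟩
    rw [← hj] at h1
    simpa only [hinj'.eq_iff, Finset.sum_ite_eq', Finset.mem_univ, if_true] using h1
  · push Not at hj
    simp only [hj, if_false, Finset.sum_const_zero] at h1
    exact absurd h1 (ne_of_gt (hp i))

/-- Identifiability of finite mixtures of logistic distributions: if two finite mixtures
with positive weights and pairwise distinct component parameters coincide as functions on
`ℝ`, then they have the same number of components and the components (weights and
parameters) match under a permutation. -/
theorem logistic_mixture_identifiable
    (k k' : ℕ) (γ c : Fin k → ℝ) (γ' c' : Fin k' → ℝ)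
    (pw : Fin k → ℝ) (qw : Fin k' → ℝ)
    (hγ : ∀ i, 0 < γ i) (hγ' : ∀ j, 0 < γ' j)
    (hp : ∀ i, 0 < pw i) (hq : ∀ j, 0 < qw j)
    (hdist : ∀ i j : Fin k, i ≠ j → (γ i, c i) ≠ (γ j, c j))
    (hdist' : ∀ i j : Fin k', i ≠ j → (γ' i, c' i) ≠ (γ' j, c' j))
    (h : ∀ y : ℝ, ∑ i, pw i * logisticG (γ i) (c i) y =
      ∑ j, qw j * logisticG (γ' j) (c' j) y) :
    k = k' ∧ ∃ e : Fin k ≃ Fin k',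
      ∀ i, pw i = qw (e i) ∧ γ i = γ' (e i) ∧ c i = c' (e i) := by
  classical
  let θ : Fin k → ℝ × ℝ := fun i => (γ i, c i)
  let θ' : Fin k' → ℝ × ℝ := fun j => (γ' j, c' j)
  have hinj : Function.Injective θ := fun i j hij => by
    by_contra hne
    exact hdist i j hne hij
  have hinj' : Function.Injective θ' := fun i j hij => by
    by_contra hne
    exact hdist' i j hne hij
  let s : Finset (ℝ × ℝ) := Finset.univ.image θ ∪ Finset.univ.image θ'
  have hmem : ∀ i, θ i ∈ s := fun i => by simp [s]
  have hmem' : ∀ j, θ' j ∈ s := fun j => by simp [s]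
  have key : ∀ p, (∑ i, if θ i = p then pw i else 0) = ∑ j, if θ' j = p then qw j else 0 := by
    intro p
    by_cases hps : p ∈ s
    · refine sub_eq_zero.1 (logistic_linindep_aux s
        (fun p => (∑ i, if θ i = p then pw i else 0) - ∑ j, if θ' j = p then qw j else 0)
        ?_ ?_ p hps)
      · intro p hp
        simp only [s, Finset.mem_union, Finset.mem_image, Finset.mem_univ, true_and] at hp
        rcases hp with ⟨i, rfl⟩ | ⟨i, rfl⟩
        · exact hγ i
        · exact hγ' i
      · intro y
        simp only [sub_mul, Finset.sum_sub_distrib, Finset.sum_mul, ite_mul, zero_mul]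
        rw [Finset.sum_comm, Finset.sum_comm (s := s)]
        simp only [Finset.sum_ite_eq, hmem, hmem', if_true]
        exact sub_eq_zero.2 (h y)
    · rw [Finset.sum_eq_zero, Finset.sum_eq_zero]
      · intro j _
        rw [if_neg]
        rintro rfl
        exact hps (hmem' j)
      · intro j _
        rw [if_neg]
        rintro rfl
        exact hps (hmem j)
  choose f hf1 hf2 using logistic_match_aux θ θ' pw qw hp hinj hinj' key
  choose g hg1 hg2 using logistic_match_aux θ' θ qw pw hq hinj' hinj (fun p => (key p).symm)
  let e : Fin k ≃ Fin k' :=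
    ⟨f, g, fun i => hinj (by rw [hg1, hf1]), fun j => hinj' (by rw [hf1, hg1])⟩
  refine ⟨by simpa using Fintype.card_congr e, e, fun i => ⟨hf2 i, ?_, ?_⟩⟩
  · exact (congrArg Prod.fst (hf1 i)).symm
  · exact (congrArg Prod.snd (hf1 i)).symm
end
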